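/- Let $(w_N)$ be probability weights on $\mathbb{N} \cup \{0\}$ and suppose, for a fixed $C > 0$: (a) $\limsup_{N} \sum_{k \notin I_{N,C}} w_N(k) \le \varepsilon$, and (b) on $I_{N,C}$ one has $w_N(k) = g_N(k)(1 + \varepsilon_k(N))$ with $g_N(k) = \frac{1}{\sqrt{2\pi \log\log N}} \exp(-(k - \log\log N)^2/(2\log\log N))$ and $\sup_{k \in I_{N,C}} |\varepsilon_k(N)| \to 0$. Then $\limsup_{N \to \infty} \sum_{k \ge 0} |w_N(k+1) - w_N(k)| \le 4\varepsilon$ (up to an absolute constant times $\varepsilon$). -/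

import Mathlib

open Filter

lemma unimodal_aux (v : ℕ → ℝ) (M : ℝ) (m : ℕ) (h0 : ∀ k, 0 ≤ v k) (hM : ∀ k, v k ≤ M)
    (hinc : ∀ k, k + 1 ≤ m → v k ≤ v (k + 1)) (hdec : ∀ k, m < k → v (k + 1) ≤ v k) (n : ℕ) :
    ∑ k ∈ Finset.range n, |v (k + 1) - v k| ≤ 4 * M := by
  have hM0 : 0 ≤ M := (h0 0).trans (hM 0)
  set F : ℕ → ℝ := fun k => if k ≤ m then v k else 4 * M - v k with hF
  have h1 : ∀ k, |v (k + 1) - v k| ≤ F (k + 1) - F k := by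
    intro k
    have a := h0 k
    have b := h0 (k + 1)
    have c := hM k
    have d := hM (k + 1)
    simp only [hF]
    rcases lt_trichotomy k m with h | h | h
    · rw [if_pos (by omega), if_pos (by omega), abs_of_nonneg (by linarith [hinc k (by omega)])]
    · rw [if_neg (by omega), if_pos (by omega), abs_le]
      constructor <;> linarith
    · rw [if_neg (by omega), if_neg (by omega), abs_of_nonpos (by linarith [hdec k h])]
      linarith
  calc ∑ k ∈ Finset.range n, |v (k + 1) - v k|
      ≤ ∑ k ∈ Finset.range n, (F (k + 1) - F k) := Finset.sum_le_sum fun k _ => h1 k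
    _ = F n - F 0 := Finset.sum_range_sub F n
    _ ≤ 4 * M := by
      have a := h0 n
      have b := h0 0
      have c := hM n
      simp only [hF]
      rw [if_pos (Nat.zero_le m)]
      split_ifs <;> linarith

lemma key_aux (C L δ : ℝ) (hL : 0 < L) (hδ : 0 ≤ δ) (hδ' : δ ≤ 1 / 2)
    (w e : ℕ → ℝ) (hw0 : ∀ k, 0 ≤ w k) (hsum : HasSum w 1)
    (happrox : ∀ k : ℕ, |(k : ℝ) - L| ≤ C * Real.sqrt L →
      w k = (Real.sqrt (2 * Real.pi * L))⁻¹
          * Real.exp (-((k : ℝ) - L) ^ 2 / (2 * L)) * (1 + e k))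
    (herr : ∀ k : ℕ, |(k : ℝ) - L| ≤ C * Real.sqrt L → |e k| ≤ δ) :
    ∑' k : ℕ, |w (k + 1) - w k| ≤ 4 * (Real.sqrt (2 * Real.pi * L))⁻¹
      + 2 * (∑' k : ℕ, if |(k : ℝ) - L| ≤ C * Real.sqrt L then 0 else w k) + 4 * δ := by
  set M := (Real.sqrt (2 * Real.pi * L))⁻¹ with hMdef
  have hM0 : 0 ≤ M := by positivity
  set t : ℕ → ℝ := fun k => if |(k : ℝ) - L| ≤ C * Real.sqrt L then 0 else w k with ht
  set v : ℕ → ℝ := fun k => if |(k : ℝ) - L| ≤ C * Real.sqrt L then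
    M * Real.exp (-((k : ℝ) - L) ^ 2 / (2 * L)) else 0 with hv
  have ht0 : ∀ k, 0 ≤ t k := by
    intro k; simp only [ht]; split_ifs
    · exact le_rfl
    · exact hw0 k
  have htw : ∀ k, t k ≤ w k := by
    intro k; simp only [ht]; split_ifs
    · exact hw0 k
    · exact le_rfl
  have hts : Summable t := Summable.of_nonneg_of_le ht0 htw hsum.summable
  have hv0 : ∀ k, 0 ≤ v k := by
    intro k; simp only [hv]; split_ifs <;> positivity
  have hvM : ∀ k, v k ≤ M := by
    intro k; simp only [hv]; split_ifs
    · have : Real.exp (-((k : ℝ) - L) ^ 2 / (2 * L)) ≤ 1 := by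
        rw [Real.exp_le_one_iff]
        apply div_nonpos_of_nonpos_of_nonneg _ (by positivity)
        nlinarith [sq_nonneg ((k : ℝ) - L)]
      nlinarith
    · exact hM0
  have hvmono : ∀ i j : ℕ, |(i : ℝ) - L| ≤ |(j : ℝ) - L| → v j ≤ v i := by
    intro i j hij
    simp only [hv]
    by_cases hj : |(j : ℝ) - L| ≤ C * Real.sqrt L
    · rw [if_pos hj, if_pos (hij.trans hj)]
      have := sq_le_sq.mpr hij
      gcongr
    · rw [if_neg hj]; exact hv0 i
  have hvsum : ∀ n, ∑ k ∈ Finset.range n, |v (k + 1) - v k| ≤ 4 * M := by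
    apply unimodal_aux v M ⌊L⌋₊ hv0 hvM
    · intro k hk
      apply hvmono
      have h1 : ((k + 1 : ℕ) : ℝ) ≤ L := (Nat.le_floor_iff hL.le).mp hk
      push_cast at h1 ⊢
      rw [abs_of_nonpos (by linarith), abs_of_nonpos (by linarith)]
      linarith
    · intro k hk
      apply hvmono
      have h1 : L < k := (Nat.floor_lt hL.le).mp hk
      push_cast
      rw [abs_of_nonneg (by linarith), abs_of_nonneg (by linarith)]
      linarith
  set d : ℕ → ℝ := fun k => t k + 2 * δ * w k with hd
  have hd0 : ∀ k, 0 ≤ d k := fun k => by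
    have := ht0 k; have := hw0 k; simp only [hd]; positivity
  have hds : HasSum d (∑' k, t k + 2 * δ * 1) := hts.hasSum.add (hsum.mul_left _)
  have hdn : ∀ n, ∑ k ∈ Finset.range n, d k ≤ ∑' k, t k + 2 * δ * 1 := fun n =>
    sum_le_hasSum _ (fun k _ => hd0 k) hds
  have hwv : ∀ k, |w k - v k| ≤ d k := by
    intro k
    by_cases hk : |(k : ℝ) - L| ≤ C * Real.sqrt L
    · have hE := abs_le.mp (herr k hk)
      have hwk := happrox k hk
      have hg := hv0 k
      simp only [hd, ht, hv, if_pos hk] at hg ⊢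
      set g := M * Real.exp (-((k : ℝ) - L) ^ 2 / (2 * L))
      rw [hwk, show g * (1 + e k) - g = g * e k by ring, abs_mul, abs_of_nonneg hg]
      have h1 : g * |e k| ≤ g * δ := by gcongr; exact herr k hk
      have h2 : g * (1 / 2) ≤ g * (1 + e k) := by gcongr; linarith
      nlinarith
    · simp only [hd, ht, hv, if_neg hk]
      have := hw0 k
      rw [sub_zero, abs_of_nonneg this]
      nlinarith [mul_nonneg hδ this]
  apply Real.tsum_le_of_sum_range_le (fun _ => abs_nonneg _)
  intro n
  have h1 : ∑ k ∈ Finset.range n, |w (k + 1) - w k| ≤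
      ∑ k ∈ Finset.range n, (|v (k + 1) - v k| + d (k + 1) + d k) := by
    apply Finset.sum_le_sum
    intro k _
    have a := abs_le.mp (hwv k)
    have b := abs_le.mp (hwv (k + 1))
    have c := abs_le.mp (le_refl |v (k + 1) - v k|)
    rw [abs_le]
    constructor <;> linarith
  rw [Finset.sum_add_distrib, Finset.sum_add_distrib] at h1
  have h2 := hdn (n + 1)
  rw [Finset.sum_range_succ'] at h2
  linarith [hdn n, hvsum n, hd0 0]


open Filter

/-- If probability weights `w_N` on `ℕ` are concentrated (up to mass `ε`)
on the Hardy–Ramanujan intervals `I_{N,C}` and on those intervals they agree with the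
Gaussian weights `g_N` up to a uniform `(1 + o(1))` factor, then
`limsup_N ∑_k |w_N(k+1) - w_N(k)| ≤ 4ε`. -/
theorem stmt13 (C ε : ℝ) (hC : 0 < C) (hε : 0 ≤ ε)
    (w : ℕ → ℕ → ℝ) (hw0 : ∀ N k, 0 ≤ w N k) (hsum : ∀ N, HasSum (w N) 1)
    (htail : Filter.limsup
        (fun N : ℕ => ∑' k : ℕ,
          if |(k : ℝ) - Real.log (Real.log N)| ≤ C * Real.sqrt (Real.log (Real.log N))
          then 0 else w N k) atTop ≤ ε)
    (e : ℕ → ℕ → ℝ)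
    (happrox : ∀ N : ℕ, ∀ k : ℕ,
      |(k : ℝ) - Real.log (Real.log N)| ≤ C * Real.sqrt (Real.log (Real.log N)) →
      w N k = (Real.sqrt (2 * Real.pi * Real.log (Real.log N)))⁻¹
          * Real.exp (-((k : ℝ) - Real.log (Real.log N)) ^ 2
              / (2 * Real.log (Real.log N))) * (1 + e N k))
    (herr : ∀ δ : ℝ, 0 < δ → ∃ N₀ : ℕ, ∀ N : ℕ, N₀ ≤ N → ∀ k : ℕ,
      |(k : ℝ) - Real.log (Real.log N)| ≤ C * Real.sqrt (Real.log (Real.log N)) →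
      |e N k| ≤ δ) :
    Filter.limsup (fun N : ℕ => ∑' k : ℕ, |w N (k + 1) - w N k|) atTop ≤ 4 * ε := by
  have hLt : Tendsto (fun N : ℕ => Real.log (Real.log N)) atTop atTop :=
    Real.tendsto_log_atTop.comp (Real.tendsto_log_atTop.comp tendsto_natCast_atTop_atTop)
  have hMt : Tendsto (fun N : ℕ => (Real.sqrt (2 * Real.pi * Real.log (Real.log N)))⁻¹) atTop
      (nhds 0) :=
    tendsto_inv_atTop_zero.comp (Real.tendsto_sqrt_atTop.comp
      (hLt.const_mul_atTop (by positivity)))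
  apply le_of_forall_pos_le_add
  intro η hη
  set ρ := min (η / 10) (1 / 2) with hρ
  have hρ0 : 0 < ρ := by positivity
  have hρ1 : ρ ≤ η / 10 := min_le_left _ _
  have hρ2 : ρ ≤ 1 / 2 := min_le_right _ _
  have hT := eventually_lt_of_limsup_lt (lt_of_le_of_lt htail (show ε < ε + ρ by linarith)) (by
    refine isBoundedUnder_of ⟨1, fun N => ?_⟩
    rw [← (hsum N).tsum_eq]
    have hle : ∀ k : ℕ, (if |(k : ℝ) - Real.log (Real.log N)| ≤
        C * Real.sqrt (Real.log (Real.log N)) then 0 else w N k) ≤ w N k := by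
      intro k; split_ifs
      · exact hw0 N k
      · exact le_rfl
    have h0 : ∀ k : ℕ, 0 ≤ (if |(k : ℝ) - Real.log (Real.log N)| ≤
        C * Real.sqrt (Real.log (Real.log N)) then 0 else w N k) := by
      intro k; split_ifs
      · exact le_rfl
      · exact hw0 N k
    exact Summable.tsum_le_tsum hle
      (Summable.of_nonneg_of_le h0 hle (hsum N).summable) (hsum N).summable)
  obtain ⟨N₀, hN₀⟩ := herr ρ hρ0
  refine limsup_le_of_le ?_ ?_
  · refine IsBoundedUnder.isCoboundedUnder_le (isBoundedUnder_of ⟨0, fun N => ?_⟩)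
    exact tsum_nonneg fun _ => abs_nonneg _
  · filter_upwards [hT, hMt.eventually_lt_const hρ0, hLt.eventually_gt_atTop 0,
      eventually_ge_atTop N₀] with N h1 h2 h3 h4
    have := key_aux C _ ρ h3 hρ0.le hρ2 (w N) (e N) (hw0 N) (hsum N) (happrox N) (hN₀ N h4)
    linarith
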